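/- Every λ ∈ D₀(T) is an eigenvalue of finite multiplicity of the partial integral operator T = T₁ + T₂: the eigenspace ker(T₁ + T₂ − λE) is nonzero and finite-dimensional. -/

import Mathlib

open MeasureTheory Complex

noncomputable section

/-- The measure on `ℝ` given by restricting Lebesgue measure to `[a,b]`. -/
abbrev muI (a b : ℝ) : MeasureTheory.Measure ℝ :=
  MeasureTheory.volume.restrict (Set.Icc a b)

/-!
Write `A = 1 - τT₁` and `B = 1 - τT₂`, both invertible. In the direction of `φ k` the operator `T₁`
acts as multiplication by `h k`, hence `A⁻¹T₁` acts as multiplication by `h k / (1 - τ h k)`, that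
is, `A S₁(τ) = T₁`. Since `B W₁(τ) = S₁(τ) T₂`, this gives `A B W₁(τ) = T₁T₂` and
`A B (1 - τ²W₁(τ)) = 1 - τ(T₁ + T₂)`.
So the eigenspace of `T₁ + T₂` at `τ⁻¹` is the fixed space of `τ²W₁(τ)`, which lies in the range of
`W₁(τ) = (AB)⁻¹T₁T₂`. That range is finite-dimensional, because `T₁T₂` is an integral operator with
the degenerate kernel `∑ φ k (x) h k (y) ψ j (y) · conj (φ k (s)) p j (s) conj (ψ j (t))`.
-/

section Algebra

theorem isUnit_one_sub_smul_of_inv_mem_resolventSet {R A : Type*} [Field R] [Ring A] [Algebra R A]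
    {τ : R} {T : A} (hτ : τ ≠ 0) (hT : τ⁻¹ ∈ resolventSet R T) : IsUnit (1 - τ • T) := by
  rw [spectrum.mem_resolventSet_iff, Algebra.algebraMap_eq_smul_one] at hT
  have h_unit := IsUnit.smul_sub_iff_sub_inv_smul (Units.mk0 τ hτ)⁻¹ T
  rw [inv_inv] at h_unit
  exact h_unit.1 hT

theorem one_sub_smul_mul_mul_eq_mul {R A : Type*} [CommRing R] [Ring A] [Algebra R A]
    {τ : R} {T₁ T₂ S W : A} (hS : (1 - τ • T₁) * S = T₁) (hW : (1 - τ • T₂) * W = S * T₂) :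
    (1 - τ • T₁) * (1 - τ • T₂) * W = T₁ * T₂ := by
  rw [mul_assoc, hW, ← mul_assoc, hS]

theorem one_sub_smul_add_eq_mul {R A : Type*} [CommRing R] [Ring A] [Algebra R A]
    {τ : R} {T₁ T₂ S W : A} (hS : (1 - τ • T₁) * S = T₁) (hW : (1 - τ • T₂) * W = S * T₂) :
    1 - τ • (T₁ + T₂) = (1 - τ • T₁) * (1 - τ • T₂) * (1 - τ ^ 2 • W) := by
  rw [mul_sub, mul_one, mul_smul_comm, one_sub_smul_mul_mul_eq_mul hS hW, sub_mul, one_mul,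
    smul_mul_assoc, mul_sub, mul_one, mul_smul_comm]
  module

theorem finiteDimensional_range_of_isUnit_mul {𝕜 E : Type*} [Field 𝕜] [AddCommGroup E] [Module 𝕜 E]
    [TopologicalSpace E] {U V W : E →L[𝕜] E} (hU : IsUnit U) (hUW : U * W = V)
    [FiniteDimensional 𝕜 V.range] : FiniteDimensional 𝕜 W.range := by
  obtain ⟨u, rfl⟩ := hU
  have hW : W = u⁻¹.1 * V := by rw [← hUW, Units.inv_mul_cancel_left]
  have h_range : W.range = V.range.map u⁻¹.1.toLinearMap := by
    rw [hW]
    exact LinearMap.range_comp _ _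
  rw [h_range]
  infer_instance

variable {𝕜 E : Type*} [Field 𝕜] [AddCommGroup E] [Module 𝕜 E] [TopologicalSpace E]
  [IsTopologicalAddGroup E] [ContinuousConstSMul 𝕜 E] {τ : 𝕜} {T₁ T₂ S W : E →L[𝕜] E}

theorem ker_add_sub_inv_smul_one_eq (hτ : τ ≠ 0) (h₁ : IsUnit (1 - τ • T₁))
    (h₂ : IsUnit (1 - τ • T₂)) (hS : (1 - τ • T₁) * S = T₁) (hW : (1 - τ • T₂) * W = S * T₂) :
    (T₁ + T₂ - τ⁻¹ • (1 : E →L[𝕜] E)).ker = (1 - τ ^ 2 • W).ker := by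
  obtain ⟨u, hu⟩ := h₁.mul h₂
  have h_factor : u * (1 - τ ^ 2 • W) = -τ • (T₁ + T₂ - τ⁻¹ • 1) := by
    rw [hu, ← one_sub_smul_add_eq_mul hS hW, smul_sub, smul_smul, neg_mul, mul_inv_cancel₀ hτ]
    module
  ext g
  calc (T₁ + T₂ - τ⁻¹ • 1) g = 0
      ↔ (-τ • (T₁ + T₂ - τ⁻¹ • 1)) g = 0 := by simp [hτ]
    _ ↔ u.1 ((1 - τ ^ 2 • W) g) = 0 := by rw [← h_factor]; rfl
    _ ↔ (1 - τ ^ 2 • W) g = 0 :=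
      (ContinuousLinearEquiv.unitsEquiv 𝕜 E u).map_eq_zero_iff

theorem finiteDimensional_ker_one_sub_smul (c : 𝕜) [FiniteDimensional 𝕜 W.range] :
    FiniteDimensional 𝕜 (1 - c • W).ker := by
  refine Submodule.finiteDimensional_of_le (S₂ := W.range) fun g hg => ⟨c • g, ?_⟩
  have hg' : g - c • W g = 0 := hg
  simpa using (sub_eq_zero.1 hg').symm

end Algebra

section Product

theorem memLp_top_ofReal_of_ae_bdd {𝕜 X : Type*} [RCLike 𝕜] [MeasurableSpace X] {μ : Measure X}
    {f : X → ℝ} (hf : AEStronglyMeasurable f μ) (h_bdd : ∃ C : ℝ, ∀ᵐ x ∂μ, |f x| ≤ C) :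
    MemLp (fun x => (f x : 𝕜)) ⊤ μ :=
  (memLp_top_of_bound hf _ h_bdd.choose_spec).ofReal

variable {X Y : Type*} [MeasurableSpace X] [MeasurableSpace Y] {μ : Measure X} {ν : Measure Y}
  {q : ENNReal}

theorem memLp_mul_prod {R : Type*} [NormedRing R] [NormMulClass R] {f : X → R} {g : Y → R}
    (hq₀ : q ≠ 0) (hq : q ≠ ⊤) (hf : MemLp f q μ) (hg : MemLp g q ν) :
    MemLp (fun z : X × Y => f z.1 * g z.2) q (μ.prod ν) := by
  have h_meas : AEStronglyMeasurable (fun z : X × Y => f z.1 * g z.2) (μ.prod ν) :=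
    hf.1.comp_fst.mul hg.1.comp_snd
  refine (integrable_norm_rpow_iff h_meas hq₀ hq).1 ?_
  simpa only [norm_mul, Real.mul_rpow (norm_nonneg _) (norm_nonneg _)] using
    (hf.integrable_norm_rpow hq₀ hq).mul_prod (hg.integrable_norm_rpow hq₀ hq)

variable [SFinite μ] [SFinite ν]

theorem ae_ae_of_ae_prod_right {P : X × Y → Prop} (hP : ∀ᵐ z ∂μ.prod ν, P z) :
    ∀ᵐ y ∂ν, ∀ᵐ x ∂μ, P (x, y) :=
  Measure.ae_ae_of_ae_prod (Measure.measurePreserving_swap.quasiMeasurePreserving.ae hP)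

theorem ae_memLp_prodMk_right {E : Type*} [NormedAddCommGroup E] {f : X × Y → E} (hq₀ : q ≠ 0)
    (hq : q ≠ ⊤) (hf : MemLp f q (μ.prod ν)) : ∀ᵐ y ∂ν, MemLp (fun x => f (x, y)) q μ := by
  filter_upwards [hf.1.prodMk_right, (hf.integrable_norm_rpow hq₀ hq).prod_left_ae] with y hm hi
  exact (integrable_norm_rpow_iff hm hq₀ hq).1 hi

end Product

section Fiber

variable {𝕜 X Y ι κ : Type*} [RCLike 𝕜] [MeasurableSpace X] [MeasurableSpace Y]
  {μ : Measure X} {ν : Measure Y}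

theorem integrable_star_mul {u v : X → 𝕜} (hu : MemLp u 2 μ) (hv : MemLp v 2 μ) :
    Integrable (fun x => star (u x) * v x) μ :=
  hu.star.integrable_mul hv

/-- The coefficient `y ↦ ∫ conj (φ s) f (s, y) dμ(s)` of `f` along `φ` on the horizontal fibres.
Coefficients on the vertical fibres are obtained from it by composing `f` with `Prod.swap`. -/
def fiberCoeff (μ : Measure X) (φ : X → 𝕜) (f : X × Y → 𝕜) (y : Y) : 𝕜 :=
  ∫ s, star (φ s) * f (s, y) ∂μ

theorem integral_sum_mul_star_mul [Fintype ι] {φ : ι → X → 𝕜} {u : X → 𝕜}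
    (hφ : ∀ k, MemLp (φ k) 2 μ) (hu : MemLp u 2 μ) (c : ι → 𝕜) :
    ∫ s, (∑ k, c k * star (φ k s)) * u s ∂μ = ∑ k, c k * ∫ s, star (φ k s) * u s ∂μ := by
  simp only [Finset.sum_mul, mul_assoc]
  rw [integral_finsetSum _ fun k _ => (integrable_star_mul (hφ k) hu).const_mul _]
  simp only [integral_const_mul]

variable [SFinite ν]

theorem integrable_star_mul_fiberCoeff_swap {φ p : X → 𝕜} {ψ : Y → 𝕜} {f : X × Y → 𝕜}
    (hφ : MemLp φ 2 μ) (hp : MemLp p ⊤ μ) (hψ : MemLp ψ 2 ν) (hf : MemLp f 2 (μ.prod ν)) :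
    Integrable (fun x => star (φ x) * (p x * fiberCoeff ν ψ (f ∘ Prod.swap) x)) μ := by
  have h_prod : Integrable (fun z : X × Y => p z.1 * star (φ z.1) * star (ψ z.2) * f z)
      (μ.prod ν) :=
    (memLp_mul_prod two_ne_zero ENNReal.ofNat_ne_top (hφ.star.mul' hp) hψ.star).integrable_mul hf
  refine h_prod.integral_prod_left.congr (ae_of_all _ fun x => ?_)
  simp only [mul_assoc, integral_const_mul]
  exact mul_left_comm _ _ _

variable [SFinite μ]

theorem fiberCoeff_ae_eq_sum [Fintype κ] {φ : X → 𝕜} {u : κ → X → 𝕜} {v : κ → Y → 𝕜}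
    {f : X × Y → 𝕜} (hu : ∀ j, Integrable (fun x => star (φ x) * u j x) μ)
    (hf : ∀ᵐ z ∂μ.prod ν, f z = ∑ j, u j z.1 * v j z.2) :
    ∀ᵐ y ∂ν, fiberCoeff μ φ f y = ∑ j, (∫ x, star (φ x) * u j x ∂μ) * v j y := by
  filter_upwards [ae_ae_of_ae_prod_right hf] with y hy
  calc fiberCoeff μ φ f y = ∫ s, ∑ j, star (φ s) * u j s * v j y ∂μ := by
        refine integral_congr_ae (hy.mono fun s hs => ?_)
        simp only [hs, Finset.mul_sum, mul_assoc]
    _ = ∑ j, (∫ x, star (φ x) * u j x ∂μ) * v j y := by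
        rw [integral_finsetSum _ fun j _ => (hu j).mul_const _]
        simp only [integral_mul_const]

theorem finiteDimensional_range_of_ae_eq_sum {α : Type*} [MeasurableSpace α] {ρ : Measure α}
    {E : Type*} [AddCommGroup E] [Module 𝕜 E] {q : ENNReal} [Fintype κ] {F : κ → α → 𝕜}
    (hF : ∀ i, MemLp (F i) q ρ) (T : E →ₗ[𝕜] Lp 𝕜 q ρ) (c : E → κ → 𝕜)
    (hT : ∀ f, ∀ᵐ z ∂ρ, T f z = ∑ i, c f i * F i z) :
    FiniteDimensional 𝕜 (LinearMap.range T) := by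
  have h_span : LinearMap.range T ≤ Submodule.span 𝕜 (Set.range fun i => (hF i).toLp (F i)) := by
    rintro _ ⟨f, rfl⟩
    have h_eq : T f = ∑ i, c f i • (hF i).toLp (F i) := by
      apply Lp.ext
      have h_terms : ∀ᵐ z ∂ρ, ∀ i, (c f i • (hF i).toLp (F i) : Lp 𝕜 q ρ) z = c f i * F i z := by
        refine ae_all_iff.2 fun i => ?_
        filter_upwards [Lp.coeFn_smul (c f i) ((hF i).toLp (F i)), (hF i).coeFn_toLp] with z h₁ h₂
        rw [h₁, Pi.smul_apply, h₂, smul_eq_mul]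
      filter_upwards [hT f, h_terms,
        Lp.coeFn_finsetSum Finset.univ fun i => c f i • (hF i).toLp (F i)] with z h₁ h₂ h₃
      rw [h₁, h₃, Finset.sum_apply]
      simp only [h₂]
    exact h_eq ▸ Submodule.sum_mem _ fun i _ =>
      Submodule.smul_mem _ _ (Submodule.subset_span ⟨i, rfl⟩)
  have := FiniteDimensional.span_of_finite 𝕜 (Set.finite_range fun i => (hF i).toLp (F i))
  exact Submodule.finiteDimensional_of_le h_span

end Fiber

section PartialDiagonal

variable {𝕜 X Y ι κ : Type*} [RCLike 𝕜] [MeasurableSpace X] [MeasurableSpace Y]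
  {μ : Measure X} {ν : Measure Y} [Fintype ι] [Fintype κ]

/-- `T` is the operator `f ↦ ∑ k, h k (y) · P_k f` on `L²(μ × ν)`, where
`P_k f (x, y) = φ k (x) · ∫ conj (φ k (s)) f (s, y) dμ(s)`. Both `T₁` and `S₁(τ)` are of this
form. The symbol `h` is not required to be bounded or measurable. -/
def IsPartialDiagonal (φ : ι → X → 𝕜) (h : ι → Y → 𝕜)
    (T : Lp 𝕜 2 (μ.prod ν) →L[𝕜] Lp 𝕜 2 (μ.prod ν)) : Prop :=
  ∀ f : Lp 𝕜 2 (μ.prod ν), ∀ᵐ z ∂μ.prod ν,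
    T f z = ∑ k, φ k z.1 * (h k z.2 * fiberCoeff μ (φ k) f z.2)

namespace IsPartialDiagonal

variable {φ : ι → X → 𝕜} {h r : ι → Y → 𝕜} {T S : Lp 𝕜 2 (μ.prod ν) →L[𝕜] Lp 𝕜 2 (μ.prod ν)}

theorem sub (hT : IsPartialDiagonal φ h T) (hS : IsPartialDiagonal φ r S) :
    IsPartialDiagonal φ (h - r) (T - S) := by
  intro f
  filter_upwards [hT f, hS f, Lp.coeFn_sub (T f) (S f)] with z hTf hSf h_sub
  simp only [sub_apply, h_sub, Pi.sub_apply, hTf, hSf, sub_mul, mul_sub, Finset.sum_sub_distrib]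

theorem smul (τ : 𝕜) (hT : IsPartialDiagonal φ h T) : IsPartialDiagonal φ (τ • h) (τ • T) := by
  intro f
  filter_upwards [hT f, Lp.coeFn_smul τ (T f)] with z hTf h_smul
  simp only [smul_apply, h_smul, Pi.smul_apply, hTf, smul_eq_mul, Finset.mul_sum]
  exact Finset.sum_congr rfl fun k _ => by ring

theorem eq_zero (hT : IsPartialDiagonal φ 0 T) : T = 0 := by
  ext1 f
  apply Lp.ext
  filter_upwards [hT f, Lp.coeFn_zero 𝕜 2 (μ.prod ν)] with z hTf h_zero
  simp only [hTf, zero_apply, h_zero, Pi.zero_apply, zero_mul, mul_zero, Finset.sum_const_zero]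

variable [SFinite μ] [SFinite ν]

theorem of_kernel (hφ : ∀ k, MemLp (φ k) 2 μ)
    (hT : ∀ f : Lp 𝕜 2 (μ.prod ν), ∀ᵐ z ∂μ.prod ν,
      T f z = ∫ s, (∑ k, φ k z.1 * star (φ k s) * h k z.2) * f (s, z.2) ∂μ) :
    IsPartialDiagonal φ h T := by
  intro f
  have h_slice := ae_memLp_prodMk_right two_ne_zero ENNReal.ofNat_ne_top (Lp.memLp f)
  filter_upwards [hT f, Measure.quasiMeasurePreserving_snd.ae h_slice] with z hTf hz
  simp only [hTf, mul_right_comm _ (star _), integral_sum_mul_star_mul hφ hz]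
  simp only [mul_assoc, fiberCoeff]

variable [DecidableEq ι]

theorem mul (hφ : ∀ k, MemLp (φ k) 2 μ)
    (hφON : ∀ i j, ∫ x, star (φ i x) * φ j x ∂μ = if i = j then 1 else 0)
    (hT : IsPartialDiagonal φ h T) (hS : IsPartialDiagonal φ r S) :
    IsPartialDiagonal φ (h * r) (T * S) := by
  intro f
  have h_coeff : ∀ᵐ y ∂ν, ∀ k, fiberCoeff μ (φ k) (S f) y = r k y * fiberCoeff μ (φ k) f y := by
    refine ae_all_iff.2 fun k => ?_
    filter_upwards [fiberCoeff_ae_eq_sum (v := fun j y => r j y * fiberCoeff μ (φ j) f y)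
      (fun j => integrable_star_mul (hφ k) (hφ j)) (hS f)] with y hy
    simp only [hy, hφON, ite_mul, one_mul, zero_mul, Finset.sum_ite_eq, Finset.mem_univ, if_true]
  filter_upwards [hT (S f), Measure.quasiMeasurePreserving_snd.ae h_coeff] with z hTS hz
  simp only [mul_apply_eq_comp, hTS, hz, Pi.mul_apply, mul_assoc]

/-- `1 - τ h` may vanish on a set that is not known to be null, where `h / (1 - τ h)` takes the junk
value `0`. There the symbol of the defect `D = (1 - τT)S - T` is `-h`, not `0`, but it is still
annihilated by `1 - τ h`, so that `(1 - τT)D = 0`. -/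
theorem one_sub_smul_mul_eq (hφ : ∀ k, MemLp (φ k) 2 μ)
    (hφON : ∀ i j, ∫ x, star (φ i x) * φ j x ∂μ = if i = j then 1 else 0) {τ : 𝕜}
    (hT : IsPartialDiagonal φ h T) (hS : IsPartialDiagonal φ (h / (1 - τ • h)) S)
    (h_unit : IsUnit (1 - τ • T)) : (1 - τ • T) * S = T := by
  set D := S - τ • (T * S) - T
  have hD_diag := (hS.sub ((hT.mul hφ hφON hS).smul τ)).sub hT
  have h_defect : IsPartialDiagonal φ 0 (D - τ • (T * D)) := by
    convert hD_diag.sub ((hT.mul hφ hφON hD_diag).smul τ) using 1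
    ext k y
    simp only [Pi.zero_apply, Pi.sub_apply, Pi.smul_apply, Pi.mul_apply, Pi.div_apply, Pi.one_apply,
      smul_eq_mul]
    by_cases h0 : 1 - τ * h k y = 0
    · rw [h0, div_zero]
      linear_combination h k y * h0
    · have h_div : h k y / (1 - τ * h k y) * (1 - τ * h k y) = h k y := div_mul_cancel₀ _ h0
      linear_combination -(1 - τ * h k y) * h_div
  have hD0 : D = 0 := by
    rw [← h_unit.mul_right_eq_zero, sub_mul, one_mul, smul_mul_assoc, h_defect.eq_zero]
  rw [sub_mul, one_mul, smul_mul_assoc]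
  exact sub_eq_zero.1 hD0

end IsPartialDiagonal

variable [SFinite μ] [SFinite ν]

theorem ae_eq_sum_mul_fiberCoeff_swap_of_kernel {ψ : κ → Y → 𝕜} {p : κ → X → 𝕜}
    {T : Lp 𝕜 2 (μ.prod ν) →L[𝕜] Lp 𝕜 2 (μ.prod ν)} (hψ : ∀ j, MemLp (ψ j) 2 ν)
    (hT : ∀ f : Lp 𝕜 2 (μ.prod ν), ∀ᵐ z ∂μ.prod ν,
      T f z = ∫ t, (∑ j, p j z.1 * ψ j z.2 * star (ψ j t)) * f (z.1, t) ∂ν)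
    (f : Lp 𝕜 2 (μ.prod ν)) : ∀ᵐ z ∂μ.prod ν,
      T f z = ∑ j, p j z.1 * fiberCoeff ν (ψ j) (f ∘ Prod.swap) z.1 * ψ j z.2 := by
  have h_slice := ae_memLp_prodMk_right two_ne_zero ENNReal.ofNat_ne_top
    ((Lp.memLp f).comp_measurePreserving Measure.measurePreserving_swap)
  filter_upwards [hT f, Measure.quasiMeasurePreserving_fst.ae h_slice] with z hTf hz
  rw [hTf]
  refine (integral_sum_mul_star_mul hψ hz _).trans (Finset.sum_congr rfl fun j _ => ?_)
  exact mul_right_comm _ _ _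

theorem finiteDimensional_range_mul {φ : ι → X → 𝕜} {h : ι → Y → 𝕜} {ψ : κ → Y → 𝕜}
    {p : κ → X → 𝕜} {T₁ T₂ : Lp 𝕜 2 (μ.prod ν) →L[𝕜] Lp 𝕜 2 (μ.prod ν)}
    (hφ : ∀ k, MemLp (φ k) 2 μ) (hh : ∀ k, MemLp (h k) ⊤ ν) (hψ : ∀ j, MemLp (ψ j) 2 ν)
    (hp : ∀ j, MemLp (p j) ⊤ μ) (hT₁ : IsPartialDiagonal φ h T₁)
    (hT₂ : ∀ f : Lp 𝕜 2 (μ.prod ν), ∀ᵐ z ∂μ.prod ν,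
      T₂ f z = ∑ j, p j z.1 * fiberCoeff ν (ψ j) (f ∘ Prod.swap) z.1 * ψ j z.2) :
    FiniteDimensional 𝕜 (T₁ * T₂).range := by
  have hF : ∀ i : ι × κ, MemLp (fun z : X × Y => φ i.1 z.1 * (h i.1 z.2 * ψ i.2 z.2)) 2
      (μ.prod ν) := fun i =>
    memLp_mul_prod two_ne_zero ENNReal.ofNat_ne_top (hφ i.1) ((hψ i.2).mul' (hh i.1))
  refine finiteDimensional_range_of_ae_eq_sum hF (T₁ * T₂).toLinearMap
    (fun f i => ∫ x, star (φ i.1 x) * (p i.2 x * fiberCoeff ν (ψ i.2) (f ∘ Prod.swap) x) ∂μ)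
    fun f => ?_
  have h_coeff := ae_all_iff.2 fun k => fiberCoeff_ae_eq_sum
    (fun j => integrable_star_mul_fiberCoeff_swap (hφ k) (hp j) (hψ j) (Lp.memLp f)) (hT₂ f)
  filter_upwards [hT₁ (T₂ f), Measure.quasiMeasurePreserving_snd.ae h_coeff] with z hTf hz
  refine hTf.trans ?_
  simp only [hz, Finset.mul_sum, Fintype.sum_prod_type]
  exact Finset.sum_congr rfl fun k _ => Finset.sum_congr rfl fun j _ => by ring

end PartialDiagonal

theorem statement14_general {𝕜 X Y ι κ : Type*} [RCLike 𝕜] [MeasurableSpace X] [MeasurableSpace Y]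
    {μ : Measure X} {ν : Measure Y} [SFinite μ] [SFinite ν] [Fintype ι] [Fintype κ]
    [DecidableEq ι] {φ : ι → X → 𝕜} (hφ : ∀ k, MemLp (φ k) 2 μ)
    (hφON : ∀ i j, ∫ x, star (φ i x) * φ j x ∂μ = if i = j then 1 else 0)
    {h : ι → Y → 𝕜} (hh : ∀ k, MemLp (h k) ⊤ ν)
    {ψ : κ → Y → 𝕜} (hψ : ∀ j, MemLp (ψ j) 2 ν)
    {p : κ → X → 𝕜} (hp : ∀ j, MemLp (p j) ⊤ μ)
    {T₁ T₂ : Lp 𝕜 2 (μ.prod ν) →L[𝕜] Lp 𝕜 2 (μ.prod ν)}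
    (hT₁ : ∀ f : Lp 𝕜 2 (μ.prod ν), ∀ᵐ z ∂μ.prod ν,
      T₁ f z = ∫ s, (∑ k, φ k z.1 * star (φ k s) * h k z.2) * f (s, z.2) ∂μ)
    (hT₂ : ∀ f : Lp 𝕜 2 (μ.prod ν), ∀ᵐ z ∂μ.prod ν,
      T₂ f z = ∫ t, (∑ j, p j z.1 * ψ j z.2 * star (ψ j t)) * f (z.1, t) ∂ν)
    {P : ι → Lp 𝕜 2 (μ.prod ν) →L[𝕜] Lp 𝕜 2 (μ.prod ν)}
    (hP : ∀ k, ∀ f : Lp 𝕜 2 (μ.prod ν), ∀ᵐ z ∂μ.prod ν,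
      P k f z = φ k z.1 * ∫ s, star (φ k s) * f (s, z.2) ∂μ)
    {τ : 𝕜} (hτ : τ ≠ 0) (hτ₁ : τ⁻¹ ∈ resolventSet 𝕜 T₁) (hτ₂ : τ⁻¹ ∈ resolventSet 𝕜 T₂)
    {S W : Lp 𝕜 2 (μ.prod ν) →L[𝕜] Lp 𝕜 2 (μ.prod ν)}
    (hS : ∀ f : Lp 𝕜 2 (μ.prod ν), ∀ᵐ z ∂μ.prod ν,
      S f z = ∑ k, h k z.2 / (1 - τ * h k z.2) * P k f z)
    (hW : (1 - τ • T₂) * W = S * T₂) {g : Lp 𝕜 2 (μ.prod ν)} (hg₀ : g ≠ 0)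
    (hg : (τ ^ 2 • W) g = g) :
    (T₁ + T₂ - τ⁻¹ • (1 : Lp 𝕜 2 (μ.prod ν) →L[𝕜] Lp 𝕜 2 (μ.prod ν))).ker ≠ ⊥ ∧
      FiniteDimensional 𝕜
        (T₁ + T₂ - τ⁻¹ • (1 : Lp 𝕜 2 (μ.prod ν) →L[𝕜] Lp 𝕜 2 (μ.prod ν))).ker := by
  have hT₁_diag : IsPartialDiagonal φ h T₁ := .of_kernel hφ hT₁
  have hS_diag : IsPartialDiagonal φ (h / (1 - τ • h)) S := by
    intro f
    filter_upwards [hS f, ae_all_iff.2 fun k => hP k f] with z hSf hPf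
    simp only [hSf, hPf, mul_left_comm _ (φ _ _)]
    rfl
  have h_unit₁ := isUnit_one_sub_smul_of_inv_mem_resolventSet hτ hτ₁
  have h_unit₂ := isUnit_one_sub_smul_of_inv_mem_resolventSet hτ hτ₂
  have hTS : (1 - τ • T₁) * S = T₁ := hT₁_diag.one_sub_smul_mul_eq hφ hφON hS_diag h_unit₁
  have : FiniteDimensional 𝕜 (T₁ * T₂).range :=
    finiteDimensional_range_mul hφ hh hψ hp hT₁_diag
      (ae_eq_sum_mul_fiberCoeff_swap_of_kernel hψ hT₂)
  have : FiniteDimensional 𝕜 W.range :=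
    finiteDimensional_range_of_isUnit_mul (h_unit₁.mul h_unit₂)
      (one_sub_smul_mul_mul_eq_mul hTS hW)
  rw [ker_add_sub_inv_smul_one_eq hτ h_unit₁ h_unit₂ hTS hW]
  exact ⟨(Submodule.ne_bot_iff _).2 ⟨g, sub_eq_zero.2 hg.symm, hg₀⟩,
    finiteDimensional_ker_one_sub_smul _⟩

theorem statement14
    (a b c d : ℝ) (hab : a < b) (hcd : c < d)
    (n : ℕ) (hn : 1 ≤ n)
    (φ : Fin n → ℝ → ℂ)
    (hφL2 : ∀ k, MemLp (φ k) 2 (muI a b))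
    (hφON : ∀ i j, ∫ x, star (φ i x) * φ j x ∂(muI a b) = if i = j then 1 else 0)
    (h : Fin n → ℝ → ℝ)
    (hhmeas : ∀ k, Measurable (h k))
    (hhbdd : ∀ k, ∃ C : ℝ, ∀ᵐ y ∂(muI c d), |h k y| ≤ C)
    (m : ℕ) (hm : 1 ≤ m)
    (ψ : Fin m → ℝ → ℂ)
    (hψL2 : ∀ j, MemLp (ψ j) 2 (muI c d))
    (hψON : ∀ i j, ∫ y, star (ψ i y) * ψ j y ∂(muI c d) = if i = j then 1 else 0)
    (p : Fin m → ℝ → ℝ)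
    (hpmeas : ∀ j, Measurable (p j))
    (hpbdd : ∀ j, ∃ C : ℝ, ∀ᵐ x ∂(muI a b), |p j x| ≤ C)
    (T1 T2 : Lp ℂ 2 ((muI a b).prod (muI c d)) →L[ℂ] Lp ℂ 2 ((muI a b).prod (muI c d)))
    (hT1sa : IsSelfAdjoint T1) (hT2sa : IsSelfAdjoint T2)
    (hT1 : ∀ f : Lp ℂ 2 ((muI a b).prod (muI c d)),
      ∀ᵐ z ∂((muI a b).prod (muI c d)),
        T1 f z = ∫ s, (∑ k, φ k z.1 * star (φ k s) * (h k z.2 : ℂ)) * f (s, z.2) ∂(muI a b))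
    (hT2 : ∀ f : Lp ℂ 2 ((muI a b).prod (muI c d)),
      ∀ᵐ z ∂((muI a b).prod (muI c d)),
        T2 f z = ∫ t, (∑ j, (p j z.1 : ℂ) * ψ j z.2 * star (ψ j t)) * f (z.1, t) ∂(muI c d))
    -- the orthogonal projections `P k`
    (P : Fin n → (Lp ℂ 2 ((muI a b).prod (muI c d)) →L[ℂ] Lp ℂ 2 ((muI a b).prod (muI c d))))
    (hP : ∀ k, ∀ f : Lp ℂ 2 ((muI a b).prod (muI c d)),
      ∀ᵐ z ∂((muI a b).prod (muI c d)),
        P k f z = φ k z.1 * ∫ s, star (φ k s) * f (s, z.2) ∂(muI a b))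
    -- the operators S₁(τ)
    (S1 : ℂ → (Lp ℂ 2 ((muI a b).prod (muI c d)) →L[ℂ] Lp ℂ 2 ((muI a b).prod (muI c d))))
    (hS1 : ∀ τ : ℂ, τ ≠ 0 → τ⁻¹ ∈ resolventSet ℂ T1 → τ⁻¹ ∈ resolventSet ℂ T2 →
      ∀ f : Lp ℂ 2 ((muI a b).prod (muI c d)),
        ∀ᵐ z ∂((muI a b).prod (muI c d)),
          S1 τ f z = ∑ k, ((h k z.2 : ℂ) / (1 - τ * (h k z.2 : ℂ))) * P k f z)
    -- the operators W₁(τ) = (E-τT₂)⁻¹ S₁(τ) T₂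
    (W1 : ℂ → (Lp ℂ 2 ((muI a b).prod (muI c d)) →L[ℂ] Lp ℂ 2 ((muI a b).prod (muI c d))))
    (hW1 : ∀ τ : ℂ, τ ≠ 0 → τ⁻¹ ∈ resolventSet ℂ T1 → τ⁻¹ ∈ resolventSet ℂ T2 →
      (1 - τ • T2) * W1 τ = S1 τ * T2)
    -- the sets D(T) and R(T)
    (DT : Set ℂ)
    (hDT : DT = {τ : ℂ | τ ≠ 0 ∧ τ⁻¹ ∈ resolventSet ℂ T1 ∧ τ⁻¹ ∈ resolventSet ℂ T2 ∧
      ∃ g : Lp ℂ 2 ((muI a b).prod (muI c d)), g ≠ 0 ∧ (τ ^ 2 • W1 τ) g = g})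
    -- the set D₀(T)
    (D0 : Set ℂ) (hD0 : D0 = (fun τ : ℂ => τ⁻¹) '' DT) :
    ∀ lam ∈ D0,
      LinearMap.ker (T1 + T2 - lam • (1 : Lp ℂ 2 ((muI a b).prod (muI c d)) →L[ℂ]
          Lp ℂ 2 ((muI a b).prod (muI c d)))).toLinearMap ≠ ⊥ ∧
      FiniteDimensional ℂ
        ↥(LinearMap.ker (T1 + T2 - lam • (1 : Lp ℂ 2 ((muI a b).prod (muI c d)) →L[ℂ]
          Lp ℂ 2 ((muI a b).prod (muI c d)))).toLinearMap) := by
  subst hD0 hDT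
  rintro _ ⟨τ, ⟨hτ, hτ₁, hτ₂, g, hg₀, hg⟩, rfl⟩
  exact statement14_general hφL2 hφON
    (fun k => memLp_top_ofReal_of_ae_bdd (hhmeas k).aestronglyMeasurable (hhbdd k)) hψL2
    (fun j => memLp_top_ofReal_of_ae_bdd (hpmeas j).aestronglyMeasurable (hpbdd j)) hT1 hT2 hP
    hτ hτ₁ hτ₂ (hS1 τ hτ hτ₁ hτ₂) (hW1 τ hτ hτ₁ hτ₂) hg₀ hg
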